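/- Let N be a matching in G that admits a 2-level witness. Then |N| ≥ (2/3)·|M_max|, where M_max is a maximum-size matching in G. -/

import Mathlib

/-!
Many-to-many matchings with two-sided preferences, votes, and popularity,
following "Popular Matchings in the Many-to-Many Setting".
-/

/-- The vote of a vertex with rank function `r` (smaller rank = more preferred)
comparing two options, where `none` stands for `null` (ranked below everything). -/
def vote {β : Type*} [DecidableEq β] (r : β → ℕ) : Option β → Option β → ℤ
  | none, none => 0
  | some _, none => 1
  | none, some _ => -1
  | some x, some y => if x = y then 0 else if r x < r y then 1 else -1

/-- The common length `k` of the arrays compared in `δ_u(S₀,S₁)`: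
after padding the smaller of `S₀, S₁` with nulls and removing common elements. -/
def kOf {β : Type*} [DecidableEq β] (S₀ S₁ : Finset β) : ℕ :=
  max S₀.card S₁.card - (S₀ ∩ S₁).card

/-- `S₀ ∖ S₁`, viewed as an array of `Option`s padded with `none` (null) to length `k`. -/
noncomputable def padded {β : Type*} [DecidableEq β] (S₀ S₁ : Finset β) (k : ℕ) : List (Option β) :=
  ((S₀ \ S₁).toList.map some) ++ List.replicate (k - (S₀ \ S₁).card) none

/-- `δ_u(S₀,S₁)`: the minimum, over all permutations `σ` of `{1,…,k}`, of
`Σ_i vote_u(S'₀[i], S'₁[σ(i)])`. -/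
noncomputable def deltaSet {β : Type*} [DecidableEq β] (r : β → ℕ) (S₀ S₁ : Finset β) : ℤ :=
  Finset.univ.inf' ⟨1, Finset.mem_univ 1⟩ fun σ : Equiv.Perm (Fin (kOf S₀ S₁)) =>
    ∑ i : Fin (kOf S₀ S₁),
      vote r ((padded S₀ S₁ (kOf S₀ S₁)).getD (i : ℕ) none)
             ((padded S₁ S₀ (kOf S₀ S₁)).getD (σ i : ℕ) none)

/-- A bipartite instance `G = (A ∪ B, E)` with capacities `≥ 1` and strict
preferences of every vertex over its neighbors (given by injective-on-neighbors
rank functions; smaller rank = more preferred). -/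
structure PrefInstance (α β : Type*) [Fintype α] [Fintype β] [DecidableEq α] [DecidableEq β] where
  E : Finset (α × β)
  capA : α → ℕ
  capB : β → ℕ
  rankA : α → β → ℕ
  rankB : β → α → ℕ
  capA_pos : ∀ a, 1 ≤ capA a
  capB_pos : ∀ b, 1 ≤ capB b
  rankA_injOn : ∀ a, Set.InjOn (rankA a) {b | (a, b) ∈ E}
  rankB_injOn : ∀ b, Set.InjOn (rankB b) {a | (a, b) ∈ E}

namespace PrefInstance

variable {α β : Type*} [Fintype α] [Fintype β] [DecidableEq α] [DecidableEq β]

/-- `M(a)`: the set of `B`-vertices matched to `a` in `M`. -/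
def rowSet (M : Finset (α × β)) (a : α) : Finset β :=
  Finset.univ.filter fun b => (a, b) ∈ M

/-- `M(b)`: the set of `A`-vertices matched to `b` in `M`. -/
def colSet (M : Finset (α × β)) (b : β) : Finset α :=
  Finset.univ.filter fun a => (a, b) ∈ M

variable (I : PrefInstance α β)

/-- `M` is a matching in `G`: a subset of `E` respecting all capacities. -/
def IsMatching (M : Finset (α × β)) : Prop :=
  M ⊆ I.E ∧ (∀ a, (rowSet M a).card ≤ I.capA a) ∧ (∀ b, (colSet M b).card ≤ I.capB b)

/-- `Δ_a(M₀,M₁) = δ_a(M₀(a), M₁(a))` for `a ∈ A`. -/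
noncomputable def DeltaA (M₀ M₁ : Finset (α × β)) (a : α) : ℤ :=
  deltaSet (I.rankA a) (rowSet M₀ a) (rowSet M₁ a)

/-- `Δ_b(M₀,M₁) = δ_b(M₀(b), M₁(b))` for `b ∈ B`. -/
noncomputable def DeltaB (M₀ M₁ : Finset (α × β)) (b : β) : ℤ :=
  deltaSet (I.rankB b) (colSet M₀ b) (colSet M₁ b)

/-- `Δ(M₀,M₁) = Σ_{u ∈ A∪B} Δ_u(M₀,M₁)`. -/
noncomputable def Delta (M₀ M₁ : Finset (α × β)) : ℤ :=
  (∑ a, I.DeltaA M₀ M₁ a) + ∑ b, I.DeltaB M₀ M₁ b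

/-- `M` is a popular matching: `Δ(M,T) ≥ 0` against every matching `T`. -/
def Popular (M : Finset (α × β)) : Prop :=
  I.IsMatching M ∧ ∀ T, I.IsMatching T → 0 ≤ I.Delta M T

/-- `M` is a weakly popular matching: `Δ(T,M) ≤ 0` for every matching `T`. -/
def WeaklyPopular (M : Finset (α × β)) : Prop :=
  I.IsMatching M ∧ ∀ T, I.IsMatching T → I.Delta T M ≤ 0

/-- The edge `(a,b) ∈ E ∖ M` blocks `M`. -/
def Blocks (M : Finset (α × β)) (a : α) (b : β) : Prop :=
  (a, b) ∈ I.E ∧ (a, b) ∉ M ∧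
  ((rowSet M a).card < I.capA a ∨ ∃ b' ∈ rowSet M a, I.rankA a b < I.rankA a b') ∧
  ((colSet M b).card < I.capB b ∨ ∃ a' ∈ colSet M b, I.rankB b a < I.rankB b a')

/-- `M` is a pairwise-stable matching: no edge blocks it. -/
def Stable (M : Finset (α × β)) : Prop :=
  I.IsMatching M ∧ ∀ a b, ¬ I.Blocks M a b

end PrefInstance
namespace PrefInstance

variable {α β : Type*} [Fintype α] [Fintype β] [DecidableEq α] [DecidableEq β]
variable (I : PrefInstance α β)

/-- `A'`: the set of clones `a_i`, `1 ≤ i ≤ cap(a)`, of the vertices of `A`. -/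
abbrev CloneA := (a : α) × Fin (I.capA a)

/-- `B'`: the set of clones `b_j`, `1 ≤ j ≤ cap(b)`, of the vertices of `B`. -/
abbrev CloneB := (b : β) × Fin (I.capB b)

/-- `N'` is a realization of the matching `N` on the cloned vertex sets: a
(one-to-one) matching on `A' × B'` whose projection is a bijection onto `N`. -/
def IsRealization (N : Finset (α × β)) (N' : Finset (I.CloneA × I.CloneB)) : Prop :=
  (∀ e ∈ N', ∀ f ∈ N', e.1 = f.1 → e = f) ∧
  (∀ e ∈ N', ∀ f ∈ N', e.2 = f.2 → e = f) ∧
  N'.image (fun e => (e.1.1, e.2.1)) = N ∧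
  N'.card = N.card

/-- The partner of `x ∈ A'` in a one-to-one matching `N'` on clones (`none` if unmatched,
i.e. matched to the last resort `ℓ(x)` in `N*`). -/
noncomputable def partnerA (N' : Finset (I.CloneA × I.CloneB)) (x : I.CloneA) :
    Option I.CloneB :=
  if h : ∃ y, (x, y) ∈ N' then some h.choose else none

/-- The partner of `y ∈ B'` in a one-to-one matching `N'` on clones (`none` if unmatched). -/
noncomputable def partnerB (N' : Finset (I.CloneA × I.CloneB)) (y : I.CloneB) :
    Option I.CloneA :=
  if h : ∃ x, (x, y) ∈ N' then some h.choose else none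

/-- `(x, y) ∈ A' × B'` is an edge of the graph `G'_N`: either the underlying pair is an
edge of `E ∖ N` (all clone copies present), or `(x,y)` is the unique copy in `N'` of an
edge of `N`. -/
def GNEdge (N : Finset (α × β)) (N' : Finset (I.CloneA × I.CloneB))
    (x : I.CloneA) (y : I.CloneB) : Prop :=
  ((x.1, y.1) ∈ I.E ∧ (x.1, y.1) ∉ N) ∨ (x, y) ∈ N'

/-- The weight `wt_N(x,y) = vote_a(b, N*(a_i)) + vote_b(a, N*(b_j))` of an edge of `G'_N`
lying in `A' × B'` (a last-resort partner in `N*` is read as null). -/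
noncomputable def wtE (N' : Finset (I.CloneA × I.CloneB))
    (x : I.CloneA) (y : I.CloneB) : ℤ :=
  vote (I.rankA x.1) (some y.1) (Option.map Sigma.fst (I.partnerA N' x)) +
  vote (I.rankB y.1) (some x.1) (Option.map Sigma.fst (I.partnerB N' y))

/-- A one-to-one matching on the clone sets (each clone is in at most one edge).
Together with the implicit last-resort edges for unmatched clones, this represents
an `(A' ∪ B')`-complete matching in `G'_N`. -/
def IsCloneMatching (T' : Finset (I.CloneA × I.CloneB)) : Prop :=
  (∀ e ∈ T', ∀ f ∈ T', e.1 = f.1 → e = f) ∧ (∀ e ∈ T', ∀ f ∈ T', e.2 = f.2 → e = f)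

/-- The weight `wt_N` of the `(A' ∪ B')`-complete matching represented by `T'`:
the sum of the weights of its `A' × B'` edges plus, for every clone left unmatched
in `T'` (hence matched to its last resort), the weight `wt_N(v, ℓ(v))`, which is
`-1` if `v` is matched in `N'` and `0` otherwise. -/
noncomputable def wtTotal (N' T' : Finset (I.CloneA × I.CloneB)) : ℤ :=
  (∑ e ∈ T', I.wtE N' e.1 e.2) +
  (∑ x : I.CloneA,
    if ∀ y, (x, y) ∉ T' then (if ∃ y, (x, y) ∈ N' then (-1 : ℤ) else 0) else 0) +
  (∑ y : I.CloneB,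
    if ∀ x, (x, y) ∉ T' then (if ∃ x, (x, y) ∈ N' then (-1 : ℤ) else 0) else 0)

/-- A 2-level witness for `N` (with realization `N'`): partitions
`A' = A'₀ ∪ A'₁` and `B' = B'₀ ∪ B'₁` (encoded by level functions `lA, lB`, where
`true` means level 1) such that clones of `A'` unmatched in `N'` are in `A'₁`, clones
of `B'` unmatched in `N'` are in `B'₀`, `N' ⊆ (A'₀ × B'₀) ∪ (A'₁ × B'₁)`, every edge
of `G'_N` in `A'₁ × B'₀` has weight `-2`, and every edge of `G'_N` in
`(A'₀ × B'₀) ∪ (A'₁ × B'₁)` has weight `≤ 0`. -/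
def TwoLevelWitness (N : Finset (α × β)) (N' : Finset (I.CloneA × I.CloneB))
    (lA : I.CloneA → Bool) (lB : I.CloneB → Bool) : Prop :=
  (∀ x : I.CloneA, (∀ y, (x, y) ∉ N') → lA x = true) ∧
  (∀ y : I.CloneB, (∀ x, (x, y) ∉ N') → lB y = false) ∧
  (∀ e ∈ N', lA e.1 = lB e.2) ∧
  (∀ x y, I.GNEdge N N' x y → lA x = true → lB y = false → I.wtE N' x y = -2) ∧
  (∀ x y, I.GNEdge N N' x y → lA x = lB y → I.wtE N' x y ≤ 0)

end PrefInstance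

/-!
If a clone `x` of `a` is unmatched in `N'`, then it lies in `A'₁` and votes `+1` for every
neighbor, so an edge `(a, b) ∈ E ∖ N` has nonnegative weight between `x` and any clone of `b`, and
all clones of `b` must lie in `B'₁`. In a matching `M`, only vertices `a` with an unmatched clone
can have `|M(a)| > |N(a)|`, so the surplus of `M` over `N` consists of edges ending in vertices `b`
all of whose clones lie in `B'₁`, and therefore `|M| ≤ |N| + |B'₁|`.

Exchanging the two sides of the graph as well as the two levels gives `|M| ≤ |N| + |A'₀|`. All
clones in `B'₁` and in `A'₀` are matched in `N'`, the former by edges of level 1 and the latter by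
edges of level 0, so `|B'₁| + |A'₀| ≤ |N|`, and adding the two bounds yields `2|M| ≤ 3|N|`.
-/

theorem neg_one_le_vote {β : Type*} [DecidableEq β] (r : β → ℕ) (x y : Option β) :
    -1 ≤ vote r x y := by
  unfold vote
  split <;> (try split_ifs) <;> norm_num

namespace PrefInstance

open Finset

section Counting

variable {α β : Type*} [DecidableEq α] [DecidableEq β]

@[simp]
theorem mem_rowSet [Fintype β] {M : Finset (α × β)} {a : α} {b : β} :
    b ∈ rowSet M a ↔ (a, b) ∈ M := by
  simp [rowSet]

@[simp]
theorem mem_colSet [Fintype α] {M : Finset (α × β)} {a : α} {b : β} :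
    a ∈ colSet M b ↔ (a, b) ∈ M := by
  simp [colSet]

theorem card_eq_sum_card_rowSet [Fintype α] [Fintype β] (M : Finset (α × β)) :
    #M = ∑ a, #(rowSet M a) := by
  simp only [rowSet, card_filter,
    ← Fintype.sum_prod_type' fun a b => if (a, b) ∈ M then 1 else 0]
  simp

theorem card_eq_sum_card_colSet [Fintype α] [Fintype β] (M : Finset (α × β)) :
    #M = ∑ b, #(colSet M b) := by
  simp only [colSet, card_filter,
    ← Fintype.sum_prod_type_right' fun a b => if (a, b) ∈ M then 1 else 0]
  simp

/-- The edges of `M ∖ N` at those vertices of `A` whose capacity `c` is not exhausted by `N`: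
the only edges through which `M` can outgrow `N`. -/
def surplus [Fintype β] (c : α → ℕ) (M N : Finset (α × β)) : Finset (α × β) :=
  {e ∈ M \ N | #(rowSet N e.1) < c e.1}

theorem card_le_card_add_card_surplus [Finite α] [Fintype β] {c : α → ℕ} {M : Finset (α × β)}
    (hM : ∀ a, #(rowSet M a) ≤ c a) (N : Finset (α × β)) :
    #M ≤ #N + #(surplus c M N) := by
  have := Fintype.ofFinite α
  simp only [card_eq_sum_card_rowSet, ← sum_add_distrib]
  refine sum_le_sum fun a _ => ?_
  rcases lt_or_ge #(rowSet N a) (c a) with hunsat | hsat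
  · have hcover : rowSet M a ⊆ rowSet N a ∪ rowSet (surplus c M N) a := by
      intro b
      simp only [surplus, mem_rowSet, mem_union, mem_filter, mem_sdiff]
      tauto
    exact (card_le_card hcover).trans (card_union_le _ _)
  · exact ((hM a).trans hsat).trans (Nat.le_add_right _ _)

theorem card_le_card_filter_sigma [Fintype α] [Fintype β] {T : Finset (α × β)}
    {κ : β → Type*} [∀ b, Fintype (κ b)] (hT : ∀ b, #(colSet T b) ≤ Fintype.card (κ b))
    (p : (Σ b, κ b) → Prop) [DecidablePred p] (hp : ∀ e ∈ T, ∀ j, p ⟨e.2, j⟩) :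
    #T ≤ #{y | p y} := by
  rw [card_eq_sum_card_colSet, card_filter, Fintype.sum_sigma]
  refine sum_le_sum fun b _ => ?_
  rcases (colSet T b).eq_empty_or_nonempty with hempty | ⟨a, ha⟩
  · simp only [hempty, card_empty, Nat.zero_le]
  · have hb : ∀ j, p ⟨b, j⟩ := hp (a, b) (mem_colSet.1 ha)
    simpa only [hb, if_true, sum_const, card_univ, smul_eq_mul, mul_one] using hT b

end Counting

variable {α β : Type*} [Fintype α] [Fintype β] [DecidableEq α] [DecidableEq β]
variable {I : PrefInstance α β} {M N : Finset (α × β)} {N' : Finset (I.CloneA × I.CloneB)}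
  {lA : I.CloneA → Bool} {lB : I.CloneB → Bool}

theorem IsRealization.mem_of_mem (hN' : I.IsRealization N N') {x : I.CloneA} {y : I.CloneB}
    (h : (x, y) ∈ N') : (x.1, y.1) ∈ N :=
  hN'.2.2.1 ▸ mem_image_of_mem _ h

theorem IsRealization.injOn_projection (hN' : I.IsRealization N N') :
    Set.InjOn (fun e : I.CloneA × I.CloneB => (e.1.1, e.2.1)) N' :=
  card_image_iff.1 (hN'.2.2.1.symm ▸ hN'.2.2.2.symm)

theorem IsRealization.exists_unmatched_clone (hN' : I.IsRealization N N') {a : α}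
    (ha : #(rowSet N a) < I.capA a) : ∃ i : Fin (I.capA a), ∀ y, (⟨a, i⟩, y) ∉ N' := by
  by_contra! hmatched
  choose y hy using hmatched
  have hmaps : Set.MapsTo (fun i => (y i).1) (univ : Finset (Fin (I.capA a)))
      (rowSet N a) := fun i _ => mem_rowSet.2 <| hN'.mem_of_mem (hy i)
  have hinj : Function.Injective fun i => (y i).1 := fun i j hij => by
    simpa using congrArg Prod.fst (hN'.injOn_projection (hy i) (hy j) (congrArg (Prod.mk a) hij))
  have hcard := card_le_card_of_injOn _ hmaps hinj.injOn
  rw [card_univ, Fintype.card_fin] at hcard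
  exact ha.not_ge hcard

theorem wtE_nonneg_of_unmatched {x : I.CloneA} (hx : ∀ y, (x, y) ∉ N') (y : I.CloneB) :
    0 ≤ I.wtE N' x y := by
  have hpartner : I.partnerA N' x = none := dif_neg (not_exists.2 hx)
  have hvoteA : vote (I.rankA x.1) (some y.1) (Option.map Sigma.fst (I.partnerA N' x)) = 1 := by
    rw [hpartner]; rfl
  have hvoteB := neg_one_le_vote (I.rankB y.1) (some x.1) (Option.map Sigma.fst (I.partnerB N' y))
  rw [wtE, hvoteA]
  linarith

/-- A weakening of `TwoLevelWitness` that suffices for the size bound: edges of `E ∖ N` inside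
one level are unconstrained, and those in `A'₁ × B'₀` only need negative weight. -/
structure WeakTwoLevelWitness (I : PrefInstance α β) (N : Finset (α × β))
    (N' : Finset (I.CloneA × I.CloneB)) (lA : I.CloneA → Bool) (lB : I.CloneB → Bool) : Prop where
  levelA_of_unmatched : ∀ x, (∀ y, (x, y) ∉ N') → lA x = true
  levelB_of_unmatched : ∀ y, (∀ x, (x, y) ∉ N') → lB y = false
  level_eq : ∀ x y, (x, y) ∈ N' → lA x = lB y
  wtE_neg : ∀ x y, (x.1, y.1) ∈ I.E → (x.1, y.1) ∉ N → lA x = true → lB y = false →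
    I.wtE N' x y < 0

theorem TwoLevelWitness.weak (h : I.TwoLevelWitness N N' lA lB) :
    I.WeakTwoLevelWitness N N' lA lB where
  levelA_of_unmatched := h.1
  levelB_of_unmatched := h.2.1
  level_eq x y hxy := h.2.2.1 (x, y) hxy
  wtE_neg x y hE hN hx hy := by
    rw [h.2.2.2.1 x y (.inl ⟨hE, hN⟩) hx hy]
    norm_num

namespace WeakTwoLevelWitness

theorem levelB_eq_true_of_neighbor_unmatched (h : I.WeakTwoLevelWitness N N' lA lB) {x : I.CloneA}
    (hx : ∀ y, (x, y) ∉ N') {y : I.CloneB} (hE : (x.1, y.1) ∈ I.E) (hN : (x.1, y.1) ∉ N) :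
    lB y = true := by
  by_contra hy
  exact (h.wtE_neg x y hE hN (h.levelA_of_unmatched x hx) (Bool.eq_false_of_not_eq_true hy)).not_ge
    (wtE_nonneg_of_unmatched hx y)

theorem card_le_card_add_card_levelB (h : I.WeakTwoLevelWitness N N' lA lB)
    (hN' : I.IsRealization N N') (hM : I.IsMatching M) :
    #M ≤ #N + #{y | lB y = true} := by
  obtain ⟨hME, hrow, hcol⟩ := hM
  have hsub : surplus I.capA M N ⊆ M := (filter_subset _ _).trans sdiff_subset
  have hlevel : ∀ e ∈ surplus I.capA M N, ∀ j, lB ⟨e.2, j⟩ = true := by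
    intro e he j
    obtain ⟨he, hunsat⟩ := mem_filter.1 he
    obtain ⟨heM, heN⟩ := mem_sdiff.1 he
    obtain ⟨i, hi⟩ := hN'.exists_unmatched_clone hunsat
    exact h.levelB_eq_true_of_neighbor_unmatched hi (hME heM) heN
  have hcolSurplus (b : β) : #(colSet (surplus I.capA M N) b) ≤ Fintype.card (Fin (I.capB b)) :=
    calc #(colSet (surplus I.capA M N) b)
      _ ≤ #(colSet M b) := card_le_card (monotone_filter_right _ fun _ _ hab => hsub hab)
      _ ≤ I.capB b := hcol b
      _ = Fintype.card (Fin (I.capB b)) := (Fintype.card_fin _).symm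
  exact (card_le_card_add_card_surplus hrow N).trans
    (Nat.add_le_add_left (card_le_card_filter_sigma hcolSurplus _ hlevel) _)

theorem card_levelB_add_card_levelA_le (h : I.WeakTwoLevelWitness N N' lA lB) :
    #{y | lB y = true} + #{x | lA x = false} ≤ #N' := by
  have hB : #{y | lB y = true} ≤ #{e ∈ N' | lA e.1 = true} := by
    refine card_le_card_of_surjOn Prod.snd fun y hy => ?_
    have hy : lB y = true := by simpa using hy
    obtain ⟨x, hxy⟩ : ∃ x, (x, y) ∈ N' := by
      by_contra! hfree
      simp [h.levelB_of_unmatched y hfree] at hy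
    exact ⟨(x, y), by simp [hxy, h.level_eq x y hxy, hy], rfl⟩
  have hA : #{x | lA x = false} ≤ #{e ∈ N' | ¬ lA e.1 = true} := by
    refine card_le_card_of_surjOn Prod.fst fun x hx => ?_
    have hx : lA x = false := by simpa using hx
    obtain ⟨y, hxy⟩ : ∃ y, (x, y) ∈ N' := by
      by_contra! hfree
      simp [h.levelA_of_unmatched x hfree] at hx
    exact ⟨(x, y), by simp [hxy, hx], rfl⟩
  rw [← card_filter_add_card_filter_not (s := N') (lA ·.1 = true)]
  exact add_le_add hB hA

end WeakTwoLevelWitness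

section Swap

/-- The edge set `M` with every edge read from the other side. -/
abbrev transpose {α β : Type*} (M : Finset (α × β)) : Finset (β × α) :=
  M.map (Equiv.prodComm α β).toEmbedding

/-- The instance with the two sides of the bipartition exchanged. -/
abbrev swap (I : PrefInstance α β) : PrefInstance β α where
  E := transpose I.E
  capA := I.capB
  capB := I.capA
  rankA := I.rankB
  rankB := I.rankA
  capA_pos := I.capB_pos
  capB_pos := I.capA_pos
  rankA_injOn b := by simpa using I.rankB_injOn b
  rankB_injOn a := by simpa using I.rankA_injOn a

theorem IsMatching.swap (hM : I.IsMatching M) : I.swap.IsMatching (transpose M) :=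
  ⟨map_subset_map.2 hM.1, by simpa [rowSet, colSet] using hM.2.2,
    by simpa [rowSet, colSet] using hM.2.1⟩

theorem IsRealization.swap (hN' : I.IsRealization N N') :
    I.swap.IsRealization (transpose N) (transpose N') := by
  obtain ⟨hfst, hsnd, himage, hcard⟩ := hN'
  refine ⟨fun e he f hf h => ?_, fun e he f hf h => ?_, ?_, by simpa using hcard⟩
  · exact Prod.swap_injective (hsnd e.swap (by simpa using he) f.swap (by simpa using hf) h)
  · exact Prod.swap_injective (hfst e.swap (by simpa using he) f.swap (by simpa using hf) h)
  · rw [← himage]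
    simp only [transpose, map_eq_image, image_image]
    rfl

theorem wtE_swap (x : I.CloneA) (y : I.CloneB) :
    I.swap.wtE (transpose N') y x = I.wtE N' x y := by
  rw [wtE, wtE, add_comm]
  simp [partnerA, partnerB]

theorem WeakTwoLevelWitness.swap (h : I.WeakTwoLevelWitness N N' lA lB) :
    I.swap.WeakTwoLevelWitness (transpose N) (transpose N') (!lB ·) (!lA ·) where
  levelA_of_unmatched y hy := by simpa using h.levelB_of_unmatched y (by simpa using hy)
  levelB_of_unmatched x hx := by simpa using h.levelA_of_unmatched x (by simpa using hx)
  level_eq y x hyx := by simpa using (h.level_eq x y (by simpa using hyx)).symm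
  wtE_neg y x hE hN hy hx := by
    rw [wtE_swap]
    exact h.wtE_neg x y (by simpa using hE) (by simpa using hN) (by simpa using hx)
      (by simpa using hy)

end Swap

end PrefInstance

open Finset in
theorem statement10_general {α β : Type*} [Fintype α] [Fintype β] [DecidableEq α] [DecidableEq β]
    {I : PrefInstance α β} {N : Finset (α × β)} {N' : Finset (I.CloneA × I.CloneB)}
    (hN' : I.IsRealization N N') {lA : I.CloneA → Bool} {lB : I.CloneB → Bool}
    (hW : I.WeakTwoLevelWitness N N' lA lB) {M : Finset (α × β)} (hM : I.IsMatching M) :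
    2 * #M ≤ 3 * #N := by
  have hlevelOne : #M ≤ #N + #{y | lB y = true} :=
    hW.card_le_card_add_card_levelB hN' hM
  have hlevelZero : #M ≤ #N + #{x | lA x = false} := by
    simpa using hW.swap.card_le_card_add_card_levelB hN'.swap hM.swap
  have hlevels := hW.card_levelB_add_card_levelA_le
  have hcard : #N' = #N := hN'.2.2.2
  omega

/-- Let `N` be a matching in `G` (with realization `N'`) that admits a
2-level witness. Then `|N| ≥ (2/3)·|M_max|`, where `M_max` is a maximum-size matching
in `G`. -/
theorem statement10 {α β : Type*} [Fintype α] [Fintype β] [DecidableEq α] [DecidableEq β]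
    (I : PrefInstance α β) (N : Finset (α × β)) (hN : I.IsMatching N)
    (N' : Finset (I.CloneA × I.CloneB)) (hN' : I.IsRealization N N')
    (lA : I.CloneA → Bool) (lB : I.CloneB → Bool)
    (hW : I.TwoLevelWitness N N' lA lB)
    (Mmax : Finset (α × β)) (hMmax : I.IsMatching Mmax)
    (hmax : ∀ T, I.IsMatching T → T.card ≤ Mmax.card) :
    2 * Mmax.card ≤ 3 * N.card :=
  statement10_general hN' hW.weak hMmax
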